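/- Base-monotonicity (weak union) of d-separation: In a dag G = (V, E), for all sets of vertices X, Y, Y₀, Z ⊆ V, if X and Y are d-separated by Z and Y₀ ⊆ Y, then X and Y ∖ Y₀ are d-separated by Z ∪ Y₀. -/

import Mathlib

/-!
Suppose a trail `t` from `X` to `Y \ Y₀` were not blocked by `Z ∪ Y₀`. It is blocked by `Z`, and
this cannot happen at a non-collider, so there is a first collider `t i` none of whose descendants
lies in `Z`. As `t` is open given `Z ∪ Y₀`, this collider has a descendant `y ∈ Y₀`. Follow `t` up
to `t i` and then a directed path from `t i` to `y`. From `t i` onwards the new trail only meets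
descendants of `t i`, which avoid `Z`, and by acyclicity it has no collider there; before `t i` it
agrees with `t`, whose colliders there are open by minimality of `i`. So this trail from `X` to
`y ∈ Y \ Z` is not `Z`-blocked, contradicting the d-separation of `X` and `Y` by `Z`.
-/

/-- A (directed) path of length `n` in the digraph `E`: the vertices are
`p 0, p 1, …, p (n-1)` and consecutive vertices are joined by an edge. -/
def IsPath {V : Type*} (E : V → V → Prop) (n : ℕ) (p : ℕ → V) : Prop :=
  ∀ i, i + 1 < n → E (p i) (p (i + 1))

/-- The digraph `E` is a dag: there is no directed path `v₁,…,vₙ` with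
`n ≥ 2` and `v₁ = vₙ`. -/
def IsDag {V : Type*} (E : V → V → Prop) : Prop :=
  ∀ n (p : ℕ → V), IsPath E n p → 2 ≤ n → p 0 ≠ p (n - 1)

/-- The descendant set of `X`: `X` together with all vertices `v` such that
some directed path starts at an element of `X` and ends at `v`. -/
def desc {V : Type*} (E : V → V → Prop) (X : Set V) : Set V :=
  X ∪ {v | ∃ n p, IsPath E n p ∧ 1 ≤ n ∧ p 0 ∈ X ∧ p (n - 1) = v}

/-- A trail of length `n`: consecutive vertices are joined by an edge in one
direction or the other. -/
def IsTrail {V : Type*} (E : V → V → Prop) (n : ℕ) (t : ℕ → V) : Prop :=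
  ∀ i, i + 1 < n → E (t i) (t (i + 1)) ∨ E (t (i + 1)) (t i)

/-- The trail `t` is head-to-tail at the (interior) index `i`. -/
def HeadToTail {V : Type*} (E : V → V → Prop) (t : ℕ → V) (i : ℕ) : Prop :=
  (E (t (i - 1)) (t i) ∧ E (t i) (t (i + 1))) ∨
  (E (t (i + 1)) (t i) ∧ E (t i) (t (i - 1)))

/-- The trail `t` is tail-to-tail at the (interior) index `i`. -/
def TailToTail {V : Type*} (E : V → V → Prop) (t : ℕ → V) (i : ℕ) : Prop :=
  E (t i) (t (i - 1)) ∧ E (t i) (t (i + 1))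

/-- The trail `t` is head-to-head at the (interior) index `i`. -/
def HeadToHead {V : Type*} (E : V → V → Prop) (t : ℕ → V) (i : ℕ) : Prop :=
  E (t (i - 1)) (t i) ∧ E (t (i + 1)) (t i)

/-- The trail `t` (of length `n`) is `Z`-blocked. -/
def Blocked {V : Type*} (E : V → V → Prop) (Z : Set V) (n : ℕ) (t : ℕ → V) : Prop :=
  ∃ i, 0 < i ∧ i + 1 < n ∧
    (((HeadToTail E t i ∨ TailToTail E t i) ∧ t i ∈ Z) ∨
     (HeadToHead E t i ∧ Z ∩ desc E {t i} = ∅))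

/-- `X` and `Y` are d-separated by `Z` in the digraph `E`. -/
def DSep {V : Type*} (E : V → V → Prop) (X Y Z : Set V) : Prop :=
  X ∩ Y ⊆ Z ∧
  ∀ n t, IsTrail E n t → 1 ≤ n → t 0 ∈ X \ Z → t (n - 1) ∈ Y \ Z →
    Blocked E Z n t

lemma IsDag.asymm {V : Type*} {E : V → V → Prop} (hdag : IsDag E) {a b : V}
    (hab : E a b) (hba : E b a) : False := by
  refine hdag 3 (fun k => if k = 1 then b else a) ?_ (by norm_num) (by simp)
  intro i hi
  have : i = 0 ∨ i = 1 := by omega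
  rcases this with rfl | rfl <;> simpa

lemma exists_path_of_mem_desc {V : Type*} {E : V → V → Prop} {a y : V}
    (hy : y ∈ desc E {a}) :
    ∃ n p, IsPath E n p ∧ 1 ≤ n ∧ p 0 = a ∧ p (n - 1) = y := by
  rcases hy with hy | hy
  · exact ⟨1, fun _ => a, fun i hi => by omega, le_rfl, rfl, hy.symm⟩
  · exact hy

lemma IsPath.mem_desc {V : Type*} {E : V → V → Prop} {n : ℕ} {p : ℕ → V}
    (hp : IsPath E n p) {k : ℕ} (hk : k < n) : p k ∈ desc E {p 0} :=
  Or.inr ⟨k + 1, p, fun i hi => hp i (by omega), by omega, rfl, rfl⟩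

/-- Base-monotonicity (weak union) of d-separation in a dag. -/
theorem dsep_base_mono {V : Type*} (E : V → V → Prop) (hirr : Irreflexive E)
    (hdag : IsDag E) (X Y Y₀ Z : Set V) :
    DSep E X Y Z → Y₀ ⊆ Y → DSep E X (Y \ Y₀) (Z ∪ Y₀) := by
  classical
  rintro ⟨hXY, hsep⟩ hY
  refine ⟨fun v hv => Or.inl (hXY ⟨hv.1, hv.2.1⟩), ?_⟩
  intro n t ht hn h0 hlast
  by_contra hnb
  have h0Z : t 0 ∈ X \ Z := ⟨h0.1, fun h => h0.2 (Or.inl h)⟩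
  have hex : ∃ i, 0 < i ∧ i + 1 < n ∧ HeadToHead E t i ∧ Z ∩ desc E {t i} = ∅ := by
    obtain ⟨i, hi0, hin, h | h⟩ :=
      hsep n t ht hn h0Z ⟨hlast.1.1, fun h => hlast.2 (Or.inl h)⟩
    · exact absurd ⟨i, hi0, hin, Or.inl ⟨h.1, Or.inl h.2⟩⟩ hnb
    · exact ⟨i, hi0, hin, h⟩
  obtain ⟨i, ⟨hi0, hin, hcol, hZ⟩, hmin⟩ :
      ∃ i, (0 < i ∧ i + 1 < n ∧ HeadToHead E t i ∧ Z ∩ desc E {t i} = ∅) ∧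
        ∀ j < i, ¬ (0 < j ∧ j + 1 < n ∧ HeadToHead E t j ∧ Z ∩ desc E {t j} = ∅) :=
    ⟨Nat.find hex, Nat.find_spec hex, fun j hj => Nat.find_min hex hj⟩
  have hdescZ : ∀ v ∈ desc E {t i}, v ∉ Z := fun v hv hvZ =>
    (Set.eq_empty_iff_forall_notMem.mp hZ v) ⟨hvZ, hv⟩
  obtain ⟨y, hyY₀, hydesc⟩ : ∃ y, y ∈ Y₀ ∧ y ∈ desc E {t i} := by
    by_contra hno
    refine hnb ⟨i, hi0, hin, Or.inr ⟨hcol, Set.eq_empty_iff_forall_notMem.mpr ?_⟩⟩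
    rintro v ⟨hv | hv, hvd⟩
    · exact hdescZ v hvd hv
    · exact hno ⟨v, hv, hvd⟩
  obtain ⟨m, p, hp, hm, hp0, hpm⟩ := exists_path_of_mem_desc hydesc
  -- `t` up to index `i`, continued by the directed path `p` from `t i` to `y`
  let s : ℕ → V := fun j => if j ≤ i then t j else p (j - i)
  have hs1 : ∀ j, j ≤ i → s j = t j := fun j hj => if_pos hj
  have hs2 : ∀ j, i ≤ j → s j = p (j - i) := by
    intro j hj
    rcases hj.eq_or_lt with rfl | hj
    · rw [hs1 _ le_rfl, Nat.sub_self, hp0]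
    · exact if_neg (by omega)
  have hstep : ∀ j, i ≤ j → j + 1 < i + m → E (s j) (s (j + 1)) := by
    intro j hj hjm
    rw [hs2 j hj, hs2 (j + 1) (by omega), show j + 1 - i = (j - i) + 1 by omega]
    exact hp _ (by omega)
  have hs : IsTrail E (i + m) s := by
    intro j hj
    rcases lt_or_ge j i with hji | hji
    · rw [hs1 j hji.le, hs1 (j + 1) hji]
      exact ht j (by omega)
    · exact Or.inl (hstep j hji hj)
  have hend : s (i + m - 1) = y := by
    rw [hs2 _ (by omega), show i + m - 1 - i = m - 1 by omega, hpm]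
  obtain ⟨j, hj0, hjm, hb⟩ := hsep (i + m) s hs (by omega)
    (by rw [hs1 0 (by omega)]; exact h0Z)
    (by rw [hend]; exact ⟨hY hyY₀, hdescZ y hydesc⟩)
  rcases lt_or_ge j i with hji | hji
  · simp only [HeadToTail, TailToTail, HeadToHead, hs1 j hji.le, hs1 (j + 1) hji,
      hs1 (j - 1) (by omega)] at hb
    rcases hb with hb | hb
    · exact hnb ⟨j, hj0, by omega, Or.inl ⟨hb.1, Or.inl hb.2⟩⟩
    · exact hmin j hji ⟨hj0, by omega, hb⟩
  · rcases hb with hb | hb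
    · refine hdescZ (s j) ?_ hb.2
      rw [hs2 j hji, ← hp0]
      exact hp.mem_desc (by omega)
    · exact hdag.asymm (hstep j hji hjm) hb.1.2
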